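/- Let g be a continuous complex-valued function on the closed unit disk with ‖g‖_∞ = sup_{z∈𝔻}|g(z)|, and let G_g(z) = (1/(2π))∫_𝔻 G(z,w) g(w) dA(w). Then for every z ∈ 𝔻 \ {0}, both |∂G_g/∂z (z)| ≤ μ(|z|) and |∂G_g/∂z̄ (z)| ≤ μ(|z|), where μ(r) = (‖g‖_∞(1−r²)/(8r²))·[(1+r²)/(1−r²) − ((1−r²)/(2r))·log((1+r)/(1−r))]. Moreover ∂G_g/∂z (z) = (1/(4π))∫_𝔻 (1−|w|²)/((z−w)(z·conj(w)−1)) g(w) dA(w). -/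

import Mathlib

open Metric MeasureTheory Set Filter

noncomputable section

/-- The Wirtinger derivative `∂f/∂z = (f_x - i f_y)/2`. -/
def wdz (f : ℂ → ℂ) (z : ℂ) : ℂ :=
  (fderiv ℝ f z 1 - Complex.I * fderiv ℝ f z Complex.I) / 2

/-- The Wirtinger derivative `∂f/∂z̄ = (f_x + i f_y)/2`. -/
def wdzbar (f : ℂ → ℂ) (z : ℂ) : ℂ :=
  (fderiv ℝ f z 1 + Complex.I * fderiv ℝ f z Complex.I) / 2

/-- The Laplacian `Δf = f_xx + f_yy` (equivalently `4 f_{z z̄}`). -/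
def lap (f : ℂ → ℂ) (z : ℂ) : ℂ :=
  fderiv ℝ (fun w => fderiv ℝ f w 1) z 1 +
    fderiv ℝ (fun w => fderiv ℝ f w Complex.I) z Complex.I

/-- The Poisson integral `P_ψ(z) = (1/2π) ∫₀^{2π} ((1-|z|²)/|1-z e^{-it}|²) ψ(e^{it}) dt`. -/
def poissonIntegral (ψ : ℂ → ℂ) (z : ℂ) : ℂ :=
  (1 / (2 * Real.pi) : ℝ) • ∫ t in (0:ℝ)..(2 * Real.pi),
    (((1 - ‖z‖ ^ 2) / ‖1 - z * Complex.exp (-(Complex.I * (t : ℂ)))‖ ^ 2 : ℝ) : ℂ) *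
      ψ (Complex.exp (Complex.I * (t : ℂ)))

/-- The Green potential `G_g(z) = (1/2π) ∫_𝔻 log|(1 - z w̄)/(z - w)| g(w) dA(w)`. -/
def greenPotential (g : ℂ → ℂ) (z : ℂ) : ℂ :=
  (1 / (2 * Real.pi) : ℝ) • ∫ w in ball (0:ℂ) 1,
    ((Real.log ‖(1 - z * (starRingEnd ℂ) w) / (z - w)‖ : ℝ) : ℂ) * g w

/-- `sup_{z ∈ 𝔻} |g(z)|`. -/
def supD (g : ℂ → ℂ) : ℝ := sSup ((fun z => ‖g z‖) '' ball (0:ℂ) 1)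

/-- The function `μ(r)` with constant `c` in place of `‖g‖_∞`. -/
def mu (c r : ℝ) : ℝ :=
  c * (1 - r ^ 2) / (8 * r ^ 2) *
    ((1 + r ^ 2) / (1 - r ^ 2) - (1 - r ^ 2) / (2 * r) * Real.log ((1 + r) / (1 - r)))

/-!
The real differential of `G_g` is the integral over the disc of the linear part of `G(· , w) g(w)`.
To differentiate at the points of the disc itself, where `G(· , w)` has its singularity for `w`
near `z`, the first-order Taylor remainder of `log ‖·‖` is bounded by `‖h‖ ^ (3 / 2)` times a kernel
with singularities of order `3 / 2`, whose integral over the disc is bounded uniformly in `h`.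

Both Wirtinger derivatives are then bounded by `‖g‖_∞ / (4π)` times `∫ ‖K(z, w)‖ dA(w)`, where `K`
is the kernel of the formula for `∂G_g/∂z`. The substitution `w = (z - x) / (1 - z̄ x)` turns this
integral into `∫ (1 - ‖z‖²) (1 - ‖x‖²) / (‖x‖ ‖1 - z̄ x‖⁴) dA(x)`. In polar coordinates the angular
mean of `‖1 - z̄ x‖⁻⁴` is, up to a factor, that of the square of the Poisson kernel, and the
remaining radial integral is elementary.
-/

section

open scoped ComplexConjugate Topology

theorem hasFDerivAt_integral_of_integral_remainder_le {α 𝕜 H E : Type*} [MeasurableSpace α]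
    {μ : Measure α} [RCLike 𝕜] [NormedAddCommGroup H] [NormedSpace 𝕜 H]
    [NormedAddCommGroup E] [NormedSpace ℝ E] [NormedSpace 𝕜 E]
    {F : H → α → E} {F' : α → H →L[𝕜] E} {B : H → α → ℝ} {x₀ : H} {C p : ℝ} (hp : 1 < p)
    (hF : ∀ᶠ x in 𝓝 x₀, Integrable (F x) μ) (hF' : Integrable F' μ)
    (hB : ∀ᶠ x in 𝓝 x₀, Integrable (B x) μ) (hBC : ∀ᶠ x in 𝓝 x₀, ∫ a, B x a ∂μ ≤ C)
    (hrem : ∀ᶠ x in 𝓝 x₀,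
      ∀ᵐ a ∂μ, ‖F x a - F x₀ a - F' a (x - x₀)‖ ≤ ‖x - x₀‖ ^ p * B x a) :
    HasFDerivAt (fun x ↦ ∫ a, F x a ∂μ) (∫ a, F' a ∂μ) x₀ := by
  have hbound : ∀ᶠ x in 𝓝 x₀,
      ‖∫ a, F x a ∂μ - ∫ a, F x₀ a ∂μ - (∫ a, F' a ∂μ) (x - x₀)‖ ≤ C * ‖‖x - x₀‖ ^ p‖ := by
    filter_upwards [hF, hB, hBC, hrem] with x hFx hBx hBCx hremx
    have hdiff : Integrable (fun a ↦ F x a - F x₀ a) μ := hFx.sub hF.self_of_nhds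
    rw [ContinuousLinearMap.integral_apply hF', ← integral_sub hFx hF.self_of_nhds,
      ← integral_sub hdiff (hF'.apply_continuousLinearMap _)]
    calc ‖∫ a, F x a - F x₀ a - F' a (x - x₀) ∂μ‖
        ≤ ∫ a, ‖x - x₀‖ ^ p * B x a ∂μ := norm_integral_le_of_norm_le (hBx.const_mul _) hremx
      _ = ‖x - x₀‖ ^ p * ∫ a, B x a ∂μ := integral_const_mul _ _
      _ ≤ C * ‖‖x - x₀‖ ^ p‖ := by
        rw [Real.norm_of_nonneg (by positivity), mul_comm]
        gcongr
  have hpow : (fun x ↦ ‖x - x₀‖ ^ p) =o[𝓝 x₀] fun x ↦ x - x₀ := by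
    have hzero : Tendsto (fun x ↦ ‖x - x₀‖ ^ (p - 1)) (𝓝 x₀) (𝓝 0) := by
      have hcont : Continuous fun x ↦ ‖x - x₀‖ ^ (p - 1) :=
        (continuous_id.sub continuous_const).norm.rpow_const fun _ ↦ .inr (by linarith)
      simpa [Real.zero_rpow (by linarith : p - 1 ≠ 0)] using hcont.tendsto x₀
    refine (((Asymptotics.isLittleO_one_iff ℝ).2 hzero).mul_isBigO
      (Asymptotics.isBigO_refl (fun x ↦ ‖x - x₀‖) _)).congr (fun x ↦ ?_) (fun x ↦ one_mul _)
      |>.of_norm_right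
    rw [← Real.rpow_add_one' (norm_nonneg _) (by linarith), sub_add_cancel]
  exact .of_isLittleO ((Asymptotics.IsBigO.of_bound C hbound).trans_isLittleO hpow)

-- The exponent `3 / 2` exceeds `1`, so that the remainder is `o(‖t‖)`, and is less than `2`, so
-- that the singularity at `t = -1` is integrable in the plane.
theorem abs_log_norm_one_add_sub_re_le (t : ℂ) :
    |Real.log ‖1 + t‖ - t.re| ≤ 4 * ‖t‖ ^ (3 / 2 : ℝ) * (1 + ‖1 + t‖ ^ (-(3 / 2) : ℝ)) := by
  have hsing : 0 ≤ ‖1 + t‖ ^ (-(3 / 2) : ℝ) := by positivity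
  rcases le_or_gt ‖t‖ (1 / 2) with ht | ht
  · have hre : Real.log ‖1 + t‖ - t.re = (Complex.log (1 + t) - t).re := by
      rw [Complex.sub_re, Complex.log_re]
    have hinv : (1 - ‖t‖)⁻¹ ≤ 2 := by
      rw [inv_le_comm₀ (by linarith) two_pos]
      linarith
    calc |Real.log ‖1 + t‖ - t.re| ≤ ‖Complex.log (1 + t) - t‖ := hre ▸ Complex.abs_re_le_norm _
      _ ≤ ‖t‖ ^ 2 * (1 - ‖t‖)⁻¹ / 2 := Complex.norm_log_one_add_sub_self_le (by linarith)
      _ ≤ ‖t‖ ^ 2 * 2 / 2 := by gcongr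
      _ = ‖t‖ ^ (2 : ℝ) := by norm_num
      _ ≤ ‖t‖ ^ (3 / 2 : ℝ) :=
        Real.rpow_le_rpow_of_exponent_ge' (norm_nonneg t) (by linarith) (by norm_num) (by norm_num)
      _ ≤ _ := by nlinarith [Real.rpow_nonneg (norm_nonneg t) (3 / 2)]
  · have hnorm : ‖1 + t‖ ≤ 1 + ‖t‖ := by simpa using norm_add_le 1 t
    have hlow : -Real.log ‖1 + t‖ ≤ ‖1 + t‖ ^ (-(3 / 2) : ℝ) / (3 / 2) := by
      rw [← Real.log_inv, Real.rpow_neg_eq_inv_rpow]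
      exact Real.log_le_rpow_div (by positivity) (by norm_num)
    have hup : Real.log ‖1 + t‖ ≤ ‖t‖ := by
      rcases (norm_nonneg (1 + t)).eq_or_lt with h0 | hpos
      · simp [← h0]
      · linarith [Real.log_le_sub_one_of_pos hpos]
    have hpow : ‖t‖ / 2 ≤ ‖t‖ ^ (3 / 2 : ℝ) := by
      have hsqrt : (1 / 2 : ℝ) ≤ ‖t‖ ^ (1 / 2 : ℝ) := by
        rw [← Real.sqrt_eq_rpow]
        exact Real.le_sqrt_of_sq_le (by linarith)
      rw [show (3 / 2 : ℝ) = 1 / 2 + 1 by norm_num, Real.rpow_add_one (by positivity)]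
      nlinarith
    have hre := abs_le.1 (Complex.abs_re_le_norm t)
    rw [abs_le]
    constructor <;> nlinarith

theorem abs_log_norm_add_sub_log_norm_sub_re_le {u h : ℂ} (hu : u ≠ 0) (huh : u + h ≠ 0) :
    |Real.log ‖u + h‖ - Real.log ‖u‖ - (h / u).re| ≤
      4 * ‖h‖ ^ (3 / 2 : ℝ) * (‖u‖ ^ (-(3 / 2) : ℝ) + ‖u + h‖ ^ (-(3 / 2) : ℝ)) := by
  have hadd : u + h = u * (1 + h / u) := by field_simp
  have h1 : 1 + h / u ≠ 0 := right_ne_zero_of_mul (hadd ▸ huh)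
  have hlog : Real.log ‖u + h‖ = Real.log ‖u‖ + Real.log ‖1 + h / u‖ := by
    rw [hadd, norm_mul, Real.log_mul (norm_ne_zero_iff.2 hu) (norm_ne_zero_iff.2 h1)]
  calc |Real.log ‖u + h‖ - Real.log ‖u‖ - (h / u).re|
      = |Real.log ‖1 + h / u‖ - (h / u).re| := by rw [hlog, add_sub_cancel_left]
    _ ≤ 4 * ‖h / u‖ ^ (3 / 2 : ℝ) * (1 + ‖1 + h / u‖ ^ (-(3 / 2) : ℝ)) :=
      abs_log_norm_one_add_sub_re_le _
    _ = 4 * ‖h‖ ^ (3 / 2 : ℝ) * (‖u‖ ^ (-(3 / 2) : ℝ) + ‖u + h‖ ^ (-(3 / 2) : ℝ)) := by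
      rw [hadd, norm_mul, Real.mul_rpow (norm_nonneg _) (norm_nonneg _), norm_div,
        Real.div_rpow (norm_nonneg _) (norm_nonneg _), Real.rpow_neg (norm_nonneg u)]
      ring

section RieszKernel

theorem norm_rpow_neg_le_indicator_add_one {F : Type*} [SeminormedAddCommGroup F] {α : ℝ}
    (hα : 0 ≤ α) (x : F) :
    ‖x‖ ^ (-α) ≤ (ball 0 1).indicator (fun y : F ↦ ‖y‖ ^ (-α)) x + 1 := by
  by_cases hx : x ∈ ball 0 1
  · simp [hx]
  · rw [indicator_of_notMem hx, zero_add]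
    exact Real.rpow_le_one_of_one_le_of_nonpos (by simpa using hx) (by linarith)

variable {E : Type*} [NormedAddCommGroup E] [NormedSpace ℝ E] [FiniteDimensional ℝ E]
  [MeasurableSpace E] [BorelSpace E] {μ : Measure E} [μ.IsAddHaarMeasure] {α : ℝ} {s : Set E}

theorem integrable_indicator_ball_norm_sub_rpow_neg (hα0 : 0 ≤ α)
    (hα : α < Module.finrank ℝ E) (x : E) :
    Integrable (fun y ↦ (ball 0 1).indicator (fun u : E ↦ ‖u‖ ^ (-α)) (x - y)) μ := by
  have hdim : 1 ≤ Module.finrank ℝ E := by exact_mod_cast hα0.trans_lt hα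
  have hball : IntegrableOn (fun u : E ↦ ‖u‖ ^ (-α)) (ball 0 1) μ := by
    refine integrableOn_ball_of_norm_le_rpow (C := 1) hdim hα (.of_forall fun u ↦ ?_)
      (measurable_norm.pow_const _).aestronglyMeasurable
    rw [one_mul, Real.norm_of_nonneg (by positivity)]
  exact ((integrable_indicator_iff measurableSet_ball).2 hball).comp_sub_left x

theorem integrableOn_norm_sub_rpow_neg (hα0 : 0 ≤ α) (hα : α < Module.finrank ℝ E)
    (hs : μ s ≠ ⊤) (x : E) : IntegrableOn (fun y ↦ ‖x - y‖ ^ (-α)) s μ := by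
  refine ((integrable_indicator_ball_norm_sub_rpow_neg hα0 hα x).integrableOn.add
    (integrableOn_const hs (C := (1 : ℝ)))).mono'
    ((by fun_prop : Measurable fun y ↦ ‖x - y‖).pow_const _).aestronglyMeasurable
    (.of_forall fun y ↦ ?_)
  rw [Real.norm_of_nonneg (by positivity)]
  exact norm_rpow_neg_le_indicator_add_one hα0 _

theorem setIntegral_norm_sub_rpow_neg_le (hα0 : 0 ≤ α) (hα : α < Module.finrank ℝ E)
    (hs : μ s ≠ ⊤) (x : E) :
    ∫ y in s, ‖x - y‖ ^ (-α) ∂μ ≤ ∫ u in ball 0 1, ‖u‖ ^ (-α) ∂μ + μ.real s := by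
  let k : E → ℝ := (ball 0 1).indicator fun u ↦ ‖u‖ ^ (-α)
  have hk : Integrable (fun y ↦ k (x - y)) μ :=
    integrable_indicator_ball_norm_sub_rpow_neg hα0 hα x
  have hk0 (u : E) : 0 ≤ k u := indicator_nonneg (fun v _ ↦ by positivity) u
  have hone : IntegrableOn (fun _ : E ↦ (1 : ℝ)) s μ := integrableOn_const hs
  calc ∫ y in s, ‖x - y‖ ^ (-α) ∂μ
      ≤ ∫ y in s, (k (x - y) + 1) ∂μ :=
        integral_mono (integrableOn_norm_sub_rpow_neg hα0 hα hs x) (hk.integrableOn.add hone)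
          fun y ↦ norm_rpow_neg_le_indicator_add_one hα0 _
    _ = ∫ y in s, k (x - y) ∂μ + μ.real s := by
      rw [integral_add hk.integrableOn hone, setIntegral_const, smul_eq_mul, mul_one]
    _ ≤ ∫ y, k (x - y) ∂μ + μ.real s := by
      gcongr ?_ + _
      exact setIntegral_le_integral hk (.of_forall fun y ↦ hk0 _)
    _ = ∫ u in ball 0 1, ‖u‖ ^ (-α) ∂μ + μ.real s := by
      rw [integral_sub_left_eq_self k μ x, integral_indicator measurableSet_ball]

theorem integrableOn_log_norm_sub (hdim : 1 < Module.finrank ℝ E) (hs : Bornology.IsBounded s)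
    (x : E) : IntegrableOn (fun y ↦ Real.log ‖x - y‖) s μ := by
  have hnorm : IntegrableOn (fun y ↦ ‖x - y‖) s μ :=
    ((by fun_prop : Continuous fun y ↦ ‖x - y‖).continuousOn.integrableOn_compact
      hs.isCompact_closure).mono_set subset_closure
  have hinv : IntegrableOn (fun y ↦ ‖x - y‖ ^ (-1 : ℝ)) s μ :=
    integrableOn_norm_sub_rpow_neg zero_le_one (by exact_mod_cast hdim) hs.measure_lt_top.ne x
  refine (hnorm.add hinv).mono'
    (Real.measurable_log.comp (by fun_prop : Measurable fun y ↦ ‖x - y‖)).aestronglyMeasurable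
    (.of_forall fun y ↦ ?_)
  have hlog : Real.log ‖x - y‖ ≤ ‖x - y‖ := Real.log_le_self (norm_nonneg _)
  have hneg : -Real.log ‖x - y‖ ≤ ‖x - y‖⁻¹ := by
    rw [← Real.log_inv]
    exact Real.log_le_self (by positivity)
  have h0 : 0 ≤ ‖x - y‖⁻¹ := by positivity
  rw [Real.norm_eq_abs, Pi.add_apply, Real.rpow_neg_one, abs_le]
  constructor <;> linarith [norm_nonneg (x - y)]

end RieszKernel

/-- The Green function of the unit disc. As `Real.log 0 = 0` and `x / 0 = 0`, its value on the
diagonal is `0`. -/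
def greenFunction (z w : ℂ) : ℝ := Real.log ‖(1 - z * conj w) / (z - w)‖

/-- The logarithmic derivative in `z` of `(1 - z w̄) / (z - w)`, that is, `2 ∂G/∂z` for the Green
function `G` of the unit disc. -/
def greenLogDeriv (z w : ℂ) : ℂ := ((1 - ‖w‖ ^ 2 : ℝ) : ℂ) / ((z - w) * (z * conj w - 1))

theorem one_sub_norm_le_norm_one_sub_mul {z w : ℂ} (hw : ‖w‖ ≤ 1) :
    1 - ‖z‖ ≤ ‖1 - z * w‖ := by
  calc 1 - ‖z‖ ≤ 1 - ‖z * w‖ := by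
        rw [norm_mul]
        linarith [mul_le_of_le_one_right (norm_nonneg z) hw]
    _ ≤ ‖1 - z * w‖ := by simpa using norm_sub_norm_le 1 (z * w)

theorem one_sub_mul_ne_zero {z w : ℂ} (hz : ‖z‖ < 1) (hw : ‖w‖ ≤ 1) : 1 - z * w ≠ 0 :=
  norm_pos_iff.1 ((sub_pos.2 hz).trans_le (one_sub_norm_le_norm_one_sub_mul hw))

theorem one_sub_mul_conj_ne_zero {z w : ℂ} (hz : ‖z‖ < 1) (hw : ‖w‖ ≤ 1) :
    1 - z * conj w ≠ 0 :=
  one_sub_mul_ne_zero hz (by rwa [RCLike.norm_conj])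

theorem greenFunction_eq_log_sub_log {z w : ℂ} (hz : ‖z‖ < 1) (hw : ‖w‖ ≤ 1) (hzw : z ≠ w) :
    greenFunction z w = Real.log ‖1 - z * conj w‖ - Real.log ‖z - w‖ := by
  rw [greenFunction, norm_div, Real.log_div (norm_ne_zero_iff.2 (one_sub_mul_conj_ne_zero hz hw))
    (norm_ne_zero_iff.2 (sub_ne_zero.2 hzw))]

theorem greenLogDeriv_eq_sub {z w : ℂ} (hz : ‖z‖ < 1) (hw : ‖w‖ ≤ 1) (hzw : z ≠ w) :
    greenLogDeriv z w = -conj w / (1 - z * conj w) - 1 / (z - w) := by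
  have h1 : 1 - z * conj w ≠ 0 := one_sub_mul_conj_ne_zero hz hw
  have h2 : z - w ≠ 0 := sub_ne_zero.2 hzw
  have h3 : z * conj w - 1 ≠ 0 := sub_ne_zero.2 (sub_ne_zero.1 h1).symm
  rw [greenLogDeriv]
  push_cast
  rw [← Complex.mul_conj', div_sub_div _ _ h1 h2,
    div_eq_div_iff (mul_ne_zero h2 h3) (mul_ne_zero h1 h2)]
  ring

theorem abs_log_norm_one_sub_mul_conj_sub_sub_re_le {z z' w : ℂ} {δ : ℝ} (hδ : 0 < δ)
    (hz : ‖z‖ ≤ 1 - δ) (hz' : ‖z'‖ ≤ 1 - δ) (hw : ‖w‖ ≤ 1) :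
    |Real.log ‖1 - z' * conj w‖ - Real.log ‖1 - z * conj w‖ -
        (-(z' - z) * conj w / (1 - z * conj w)).re| ≤
      ‖z' - z‖ ^ (3 / 2 : ℝ) * (8 * δ ^ (-(3 / 2) : ℝ)) := by
  have hδpow {x : ℂ} (hx : ‖x‖ ≤ 1 - δ) :
      ‖1 - x * conj w‖ ^ (-(3 / 2) : ℝ) ≤ δ ^ (-(3 / 2) : ℝ) := by
    refine Real.rpow_le_rpow_of_nonpos hδ ?_ (by norm_num)
    linarith [one_sub_norm_le_norm_one_sub_mul (z := x) (w := conj w) (by rwa [RCLike.norm_conj])]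
  have hincr : ‖-(z' - z) * conj w‖ ≤ ‖z' - z‖ := by
    rw [norm_mul, norm_neg, RCLike.norm_conj]
    exact mul_le_of_le_one_right (norm_nonneg _) hw
  have hadd : 1 - z' * conj w = 1 - z * conj w + -(z' - z) * conj w := by ring
  rw [hadd]
  calc _ ≤ 4 * ‖-(z' - z) * conj w‖ ^ (3 / 2 : ℝ) *
        (‖1 - z * conj w‖ ^ (-(3 / 2) : ℝ) + ‖1 - z' * conj w‖ ^ (-(3 / 2) : ℝ)) := by
        rw [hadd]
        exact abs_log_norm_add_sub_log_norm_sub_re_le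
          (one_sub_mul_conj_ne_zero (by linarith) hw)
          (hadd ▸ one_sub_mul_conj_ne_zero (by linarith) hw)
    _ ≤ 4 * ‖z' - z‖ ^ (3 / 2 : ℝ) * (δ ^ (-(3 / 2) : ℝ) + δ ^ (-(3 / 2) : ℝ)) :=
        mul_le_mul (by gcongr) (add_le_add (hδpow hz) (hδpow hz')) (by positivity) (by positivity)
    _ = ‖z' - z‖ ^ (3 / 2 : ℝ) * (8 * δ ^ (-(3 / 2) : ℝ)) := by ring

/-- The singular majorant, uniform for `z, z'` in the disc of radius `1 - δ`, of the ratio between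
the first-order Taylor remainder of `greenFunction · w` from `z` to `z'` and
`‖z' - z‖ ^ (3 / 2)`. -/
def greenMajorant (δ : ℝ) (z z' w : ℂ) : ℝ :=
  8 * δ ^ (-(3 / 2) : ℝ) + 4 * (‖z - w‖ ^ (-(3 / 2) : ℝ) + ‖z' - w‖ ^ (-(3 / 2) : ℝ))

theorem greenMajorant_nonneg {δ : ℝ} (hδ : 0 ≤ δ) (z z' w : ℂ) : 0 ≤ greenMajorant δ z z' w := by
  rw [greenMajorant]
  positivity

theorem abs_greenFunction_sub_sub_re_le {z z' w : ℂ} {δ : ℝ} (hδ : 0 < δ) (hz : ‖z‖ ≤ 1 - δ)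
    (hz' : ‖z'‖ ≤ 1 - δ) (hw : ‖w‖ ≤ 1) (hzw : z ≠ w) (hzw' : z' ≠ w) :
    |greenFunction z' w - greenFunction z w - (greenLogDeriv z w * (z' - z)).re| ≤
      ‖z' - z‖ ^ (3 / 2 : ℝ) * greenMajorant δ z z' w := by
  have hz1 : ‖z‖ < 1 := by linarith
  have hregular := abs_log_norm_one_sub_mul_conj_sub_sub_re_le hδ hz hz' hw
  have hadd : z - w + (z' - z) = z' - w := by ring
  have hsingular := abs_log_norm_add_sub_log_norm_sub_re_le (sub_ne_zero.2 hzw)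
    (hadd ▸ sub_ne_zero.2 hzw')
  rw [hadd] at hsingular
  have hlin : (greenLogDeriv z w * (z' - z)).re =
      (-(z' - z) * conj w / (1 - z * conj w)).re - ((z' - z) / (z - w)).re := by
    rw [greenLogDeriv_eq_sub hz1 hw hzw, ← Complex.sub_re]
    congr 1
    ring
  rw [greenFunction_eq_log_sub_log hz1 hw hzw,
    greenFunction_eq_log_sub_log (by linarith) hw hzw', hlin, greenMajorant]
  rw [abs_le] at hregular hsingular ⊢
  constructor <;> linarith

theorem ae_restrict_ball_norm_le_one : ∀ᵐ w ∂volume.restrict (ball (0 : ℂ) 1), ‖w‖ ≤ 1 := by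
  filter_upwards [ae_restrict_mem measurableSet_ball] with w hw
  exact (mem_ball_zero_iff.1 hw).le

theorem integrableOn_ball_norm_sub_rpow_neg_three_halves (z : ℂ) :
    IntegrableOn (fun w ↦ ‖z - w‖ ^ (-(3 / 2) : ℝ)) (ball 0 1) :=
  integrableOn_norm_sub_rpow_neg (by norm_num) (by norm_num) measure_ball_lt_top.ne z

theorem integrableOn_greenMajorant (δ : ℝ) (z z' : ℂ) :
    IntegrableOn (greenMajorant δ z z') (ball 0 1) :=
  (integrableOn_const measure_ball_lt_top.ne).add
    (((integrableOn_ball_norm_sub_rpow_neg_three_halves z).add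
      (integrableOn_ball_norm_sub_rpow_neg_three_halves z')).const_mul 4)

theorem exists_integral_greenMajorant_le (δ : ℝ) :
    ∃ C, ∀ z z' : ℂ, ∫ w in ball 0 1, greenMajorant δ z z' w ≤ C := by
  obtain ⟨S, hS⟩ : ∃ S, ∀ z : ℂ, ∫ w in ball 0 1, ‖z - w‖ ^ (-(3 / 2) : ℝ) ≤ S :=
    ⟨_, setIntegral_norm_sub_rpow_neg_le (by norm_num) (by norm_num) measure_ball_lt_top.ne⟩
  refine ⟨(∫ _ in ball (0 : ℂ) 1, 8 * δ ^ (-(3 / 2) : ℝ)) + 4 * (S + S), fun z z' ↦ ?_⟩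
  have hconst : IntegrableOn (fun _ : ℂ ↦ 8 * δ ^ (-(3 / 2) : ℝ)) (ball 0 1) :=
    integrableOn_const measure_ball_lt_top.ne
  have hz := integrableOn_ball_norm_sub_rpow_neg_three_halves z
  have hz' := integrableOn_ball_norm_sub_rpow_neg_three_halves z'
  simp only [greenMajorant]
  rw [integral_add hconst ((hz.fun_add hz').const_mul 4), integral_const_mul (4 : ℝ),
    integral_add hz hz']
  linarith [hS z, hS z']

theorem integrableOn_greenFunction {z : ℂ} (hz : ‖z‖ < 1) :
    IntegrableOn (greenFunction z) (ball 0 1) := by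
  have hregular : IntegrableOn (fun w ↦ Real.log ‖1 - z * conj w‖) (ball 0 1) := by
    refine (ContinuousOn.integrableOn_compact (isCompact_closedBall (0 : ℂ) 1)
      (ContinuousOn.log (by fun_prop) fun w hw ↦ ?_)).mono_set ball_subset_closedBall
    exact norm_ne_zero_iff.2 (one_sub_mul_conj_ne_zero hz (mem_closedBall_zero_iff.1 hw))
  refine (hregular.sub (integrableOn_log_norm_sub (by simp) isBounded_ball z)).congr ?_
  filter_upwards [ae_restrict_ball_norm_le_one, ae_restrict_of_ae (Measure.ae_ne volume z)]
    with w hw hzw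
  exact (greenFunction_eq_log_sub_log hz hw hzw.symm).symm

theorem integrableOn_greenLogDeriv {z : ℂ} (hz : ‖z‖ < 1) :
    IntegrableOn (greenLogDeriv z) (ball 0 1) := by
  have hregular : IntegrableOn (fun w ↦ -conj w / (1 - z * conj w)) (ball 0 1) := by
    refine (ContinuousOn.integrableOn_compact (isCompact_closedBall (0 : ℂ) 1)
      (ContinuousOn.div (by fun_prop) (by fun_prop) fun w hw ↦ ?_)).mono_set ball_subset_closedBall
    exact one_sub_mul_conj_ne_zero hz (mem_closedBall_zero_iff.1 hw)
  have hsingular : IntegrableOn (fun w ↦ 1 / (z - w)) (ball 0 1) := by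
    refine (integrableOn_norm_sub_rpow_neg zero_le_one (by simp) measure_ball_lt_top.ne z).mono'
      (by fun_prop : Measurable fun w ↦ 1 / (z - w)).aestronglyMeasurable (.of_forall fun w ↦ ?_)
    rw [norm_div, norm_one, one_div, Real.rpow_neg_one]
  refine (hregular.sub hsingular).congr ?_
  filter_upwards [ae_restrict_ball_norm_le_one, ae_restrict_of_ae (Measure.ae_ne volume z)]
    with w hw hzw
  exact (greenLogDeriv_eq_sub hz hw hzw.symm).symm

/-- The real-linear map `a dz + b dz̄` on `ℂ`: the differential of a function whose Wirtinger
derivatives are `a` and `b`. -/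
def wirtingerDifferential (a b : ℂ) : ℂ →L[ℝ] ℂ :=
  a • ContinuousLinearMap.id ℝ ℂ + b • (Complex.conjCLE : ℂ →L[ℝ] ℂ)

section WirtingerDifferential

variable {f : ℂ → ℂ} {a b z : ℂ}

@[simp]
theorem wirtingerDifferential_apply (a b h : ℂ) :
    wirtingerDifferential a b h = a * h + b * conj h := rfl

theorem wirtingerDifferential_mul_conj_mul_apply (k c h : ℂ) :
    wirtingerDifferential (k * c / 2) (conj k * c / 2) h = ((k * h).re : ℂ) * c := by
  rw [wirtingerDifferential_apply, Complex.re_eq_add_conj, map_mul]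
  ring

theorem smul_wirtingerDifferential (c : ℝ) (a b : ℂ) :
    c • wirtingerDifferential a b = wirtingerDifferential (c • a) (c • b) := by
  ext h
  simp only [smul_apply, wirtingerDifferential_apply, smul_add, smul_mul_assoc]

theorem wdz_eq_of_hasFDerivAt (hf : HasFDerivAt f (wirtingerDifferential a b) z) : wdz f z = a := by
  simp only [wdz, hf.fderiv, wirtingerDifferential_apply, map_one, Complex.conj_I]
  linear_combination (b / 2 - a / 2) * Complex.I_mul_I

theorem wdzbar_eq_of_hasFDerivAt (hf : HasFDerivAt f (wirtingerDifferential a b) z) :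
    wdzbar f z = b := by
  simp only [wdzbar, hf.fderiv, wirtingerDifferential_apply, map_one, Complex.conj_I]
  linear_combination (a / 2 - b / 2) * Complex.I_mul_I

variable {α : Type*} [MeasurableSpace α] {μ : Measure α} {p q : α → ℂ}

theorem integrable_wirtingerDifferential (hp : Integrable p μ) (hq : Integrable q μ) :
    Integrable (fun x ↦ wirtingerDifferential (p x) (q x)) μ :=
  (hp.smul_const (ContinuousLinearMap.id ℝ ℂ)).add
    (hq.smul_const (Complex.conjCLE : ℂ →L[ℝ] ℂ))

theorem integral_wirtingerDifferential (hp : Integrable p μ) (hq : Integrable q μ) :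
    ∫ x, wirtingerDifferential (p x) (q x) ∂μ =
      wirtingerDifferential (∫ x, p x ∂μ) (∫ x, q x ∂μ) := by
  simp only [wirtingerDifferential]
  rw [integral_add (hp.smul_const _) (hq.smul_const _), integral_smul_const, integral_smul_const]

end WirtingerDifferential

section GreenPotential

variable {g : ℂ → ℂ} {M : ℝ} {z : ℂ}

theorem hasFDerivAt_integral_greenFunction_mul
    (hg : AEStronglyMeasurable g (volume.restrict (ball 0 1)))
    (hM : ∀ᵐ w ∂volume.restrict (ball 0 1), ‖g w‖ ≤ M) (hz : ‖z‖ < 1) :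
    HasFDerivAt (fun z ↦ ∫ w in ball 0 1, (greenFunction z w : ℂ) * g w)
      (wirtingerDifferential (∫ w in ball 0 1, greenLogDeriv z w * g w / 2)
        (∫ w in ball 0 1, conj (greenLogDeriv z w) * g w / 2)) z := by
  obtain ⟨δ, hδ, hzδ⟩ : ∃ δ > 0, ‖z‖ < 1 - δ :=
    ⟨(1 - ‖z‖) / 2, by linarith, by linarith⟩
  have hnear : ∀ᶠ z' in 𝓝 z, ‖z'‖ < 1 - δ := continuous_norm.continuousAt.eventually_lt
    continuousAt_const hzδ
  have hK : Integrable (greenLogDeriv z) (volume.restrict (ball 0 1)) :=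
    integrableOn_greenLogDeriv hz
  have hKconj : Integrable (fun w ↦ conj (greenLogDeriv z w)) (volume.restrict (ball 0 1)) :=
    Complex.conjCLE.integrable_comp_iff.2 hK
  have hKg := (hK.mul_bdd hg hM).div_const 2
  have hKconjg := (hKconj.mul_bdd hg hM).div_const 2
  obtain ⟨C, hC⟩ := exists_integral_greenMajorant_le δ
  rw [← integral_wirtingerDifferential hKg hKconjg]
  refine hasFDerivAt_integral_of_integral_remainder_le (p := 3 / 2) (C := |M| * C)
    (B := fun z' w ↦ |M| * greenMajorant δ z z' w) (by norm_num) ?_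
    (integrable_wirtingerDifferential hKg hKconjg)
    (.of_forall fun z' ↦ (integrableOn_greenMajorant δ z z').const_mul _)
    (.of_forall fun z' ↦ ?_) ?_
  · filter_upwards [hnear] with z' hz'
    exact (integrableOn_greenFunction (by linarith)).ofReal.mul_bdd hg hM
  · rw [integral_const_mul]
    gcongr
    exact hC z z'
  · filter_upwards [hnear] with z' hz'
    filter_upwards [hM, ae_restrict_ball_norm_le_one, ae_restrict_of_ae (Measure.ae_ne volume z),
      ae_restrict_of_ae (Measure.ae_ne volume z')] with w hgw hw hzw hzw'
    rw [wirtingerDifferential_mul_conj_mul_apply, ← sub_mul, ← sub_mul, norm_mul,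
      ← Complex.ofReal_sub, ← Complex.ofReal_sub, Complex.norm_real, Real.norm_eq_abs, mul_comm |M|,
      ← mul_assoc]
    exact mul_le_mul
      (abs_greenFunction_sub_sub_re_le hδ hzδ.le hz'.le hw hzw.symm hzw'.symm)
      (hgw.trans (le_abs_self M)) (norm_nonneg _)
      (mul_nonneg (by positivity) (greenMajorant_nonneg hδ.le z z' w))

theorem hasFDerivAt_greenPotential
    (hg : AEStronglyMeasurable g (volume.restrict (ball 0 1)))
    (hM : ∀ᵐ w ∂volume.restrict (ball 0 1), ‖g w‖ ≤ M) (hz : ‖z‖ < 1) :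
    HasFDerivAt (greenPotential g)
      (wirtingerDifferential
        ((1 / (4 * Real.pi) : ℝ) • ∫ w in ball 0 1, greenLogDeriv z w * g w)
        ((1 / (4 * Real.pi) : ℝ) • ∫ w in ball 0 1, conj (greenLogDeriv z w) * g w)) z := by
  have hscale (I : ℂ) : (1 / (2 * Real.pi) : ℝ) • (I / 2) = (1 / (4 * Real.pi) : ℝ) • I := by
    simp only [Complex.real_smul]
    push_cast
    ring
  have h := (hasFDerivAt_integral_greenFunction_mul hg hM hz).const_smul (1 / (2 * Real.pi))
  rw [smul_wirtingerDifferential, integral_div, integral_div, hscale, hscale] at h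
  exact h

end GreenPotential

section CircleAverage

theorem re_one_add_div_one_sub (u : ℂ) :
    ((1 + u) / (1 - u)).re = (1 - ‖u‖ ^ 2) / ‖1 - u‖ ^ 2 := by
  rw [Complex.div_re, ← add_div, ← Complex.normSq_eq_norm_sq, ← Complex.normSq_eq_norm_sq]
  congr 1
  simp only [Complex.add_re, Complex.sub_re, Complex.add_im, Complex.sub_im, Complex.one_re,
    Complex.one_im, Complex.normSq_apply]
  ring

theorem poissonKernel_zero_of_mem_sphere {w ζ : ℂ} (hζ : ζ ∈ sphere (0 : ℂ) 1) :
    poissonKernel 0 w ζ = (1 - ‖w‖ ^ 2) / ‖1 - conj w * ζ‖ ^ 2 := by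
  have hζ1 : ‖ζ‖ = 1 := mem_sphere_zero_iff_norm.1 hζ
  have hconj : ζ * conj ζ = 1 := by rw [Complex.mul_conj', hζ1]; norm_num
  have hnorm : ‖1 - conj w * ζ‖ = ‖ζ - w‖ := by
    calc ‖1 - conj w * ζ‖ = ‖ζ * conj (ζ - w)‖ := by
          rw [map_sub, mul_sub, hconj, mul_comm ζ]
      _ = ‖ζ - w‖ := by rw [norm_mul, hζ1, one_mul, RCLike.norm_conj]
  simp only [poissonKernel, sub_zero, hζ1, hnorm, one_pow]

theorem continuousOn_poissonKernel_sphere {w : ℂ} (hw : ‖w‖ < 1) :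
    ContinuousOn (poissonKernel 0 w) (sphere 0 1) := by
  refine (ContinuousOn.div ?_ ?_ fun ζ hζ ↦ ?_).congr fun ζ ↦ poissonKernel_zero_of_mem_sphere
  · fun_prop
  · fun_prop
  · exact pow_ne_zero 2 (norm_ne_zero_iff.2 (one_sub_mul_ne_zero (by rwa [RCLike.norm_conj])
      (mem_sphere_zero_iff_norm.1 hζ).le))

theorem diffContOnCl_one_add_mul_div_one_sub_mul {c : ℂ} (hc : ‖c‖ < 1) :
    DiffContOnCl ℂ (fun ζ ↦ (1 + c * ζ) / (1 - c * ζ)) (ball 0 1) := by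
  refine DifferentiableOn.diffContOnCl fun ζ hζ ↦ ?_
  rw [closure_ball _ one_ne_zero, mem_closedBall_zero_iff] at hζ
  have hnum : DifferentiableAt ℂ (fun ζ ↦ 1 + c * ζ) ζ := by fun_prop
  have hden : DifferentiableAt ℂ (fun ζ ↦ 1 - c * ζ) ζ := by fun_prop
  exact (hnum.div hden (one_sub_mul_ne_zero hc hζ)).differentiableWithinAt

-- On the circle the kernel is the real part of the holomorphic `(1 + w̄ ζ) / (1 - w̄ ζ)`, so the
-- mean of its square is the Poisson integral of that function, evaluated at `w`.
theorem circleAverage_poissonKernel_sq {w : ℂ} (hw : ‖w‖ < 1) :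
    Real.circleAverage (fun ζ ↦ poissonKernel 0 w ζ ^ 2) 0 1 =
      (1 + ‖w‖ ^ 2) / (1 - ‖w‖ ^ 2) := by
  let f : ℂ → ℂ := fun ζ ↦ (1 + conj w * ζ) / (1 - conj w * ζ)
  have hf : DiffContOnCl ℂ f (ball 0 1) :=
    diffContOnCl_one_add_mul_div_one_sub_mul (by rwa [RCLike.norm_conj])
  have hre {ζ : ℂ} (hζ : ζ ∈ sphere (0 : ℂ) 1) : (f ζ).re = poissonKernel 0 w ζ := by
    rw [poissonKernel_zero_of_mem_sphere hζ, re_one_add_div_one_sub, norm_mul, RCLike.norm_conj,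
      mem_sphere_zero_iff_norm.1 hζ, mul_one]
  have hint : CircleIntegrable (poissonKernel 0 w • f) 0 1 :=
    ((continuousOn_poissonKernel_sphere hw).smul
      (hf.continuousOn_ball.mono sphere_subset_closedBall)).circleIntegrable zero_le_one
  calc Real.circleAverage (fun ζ ↦ poissonKernel 0 w ζ ^ 2) 0 1
      = Real.circleAverage (Complex.reCLM ∘ (poissonKernel 0 w • f)) 0 1 := by
        refine Real.circleAverage_congr_sphere fun ζ hζ ↦ ?_
        rw [abs_one] at hζ
        simp [hre hζ, sq]
    _ = (f w).re := by
        rw [Complex.reCLM.circleAverage_comp_comm hint,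
          hf.circleAverage_poissonKernel_smul (mem_ball_zero_iff.2 hw), Complex.reCLM_apply]
    _ = (1 + ‖w‖ ^ 2) / (1 - ‖w‖ ^ 2) := by
        simp only [f, Complex.conj_mul']
        norm_cast

theorem circleAverage_inv_norm_one_sub_mul_pow_four {c : ℂ} (hc : ‖c‖ < 1) :
    Real.circleAverage (fun ζ ↦ (‖1 - c * ζ‖ ^ 4)⁻¹) 0 1 =
      (1 + ‖c‖ ^ 2) / (1 - ‖c‖ ^ 2) ^ 3 := by
  have hpos : 0 < 1 - ‖c‖ ^ 2 := by nlinarith [norm_nonneg c]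
  have hpoisson : Real.circleAverage (fun ζ ↦ (‖1 - c * ζ‖ ^ 4)⁻¹) 0 1 =
      Real.circleAverage (fun ζ ↦ ((1 - ‖c‖ ^ 2) ^ 2)⁻¹ • poissonKernel 0 (conj c) ζ ^ 2) 0 1 := by
    refine Real.circleAverage_congr_sphere fun ζ hζ ↦ ?_
    rw [abs_one] at hζ
    rw [poissonKernel_zero_of_mem_sphere hζ, RCLike.norm_conj, Complex.conj_conj, smul_eq_mul]
    field_simp
  rw [hpoisson, Real.circleAverage_fun_smul,
    circleAverage_poissonKernel_sq (by rwa [RCLike.norm_conj]), RCLike.norm_conj, smul_eq_mul]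
  field_simp

end CircleAverage

section Polar

variable {E : Type*} [NormedAddCommGroup E] [NormedSpace ℝ E] {F : ℂ → E} {R : ℝ}

-- The factor `‖x‖⁻¹` cancels the Jacobian of the polar coordinates.
theorem integral_ball_norm_inv_smul_eq_setIntegral_circleMap (F : ℂ → E) (R : ℝ) :
    ∫ x in ball 0 R, ‖x‖⁻¹ • F x =
      ∫ p in Ioo 0 R ×ˢ Ioo (-Real.pi) Real.pi, F (circleMap 0 p.1 p.2) := by
  have hsub : Ioo 0 R ×ˢ Ioo (-Real.pi) Real.pi ⊆ polarCoord.target :=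
    prod_mono Ioo_subset_Ioi_self Subset.rfl
  rw [← integral_indicator measurableSet_ball, ← Complex.integral_comp_polarCoord_symm,
    ← inter_eq_self_of_subset_right hsub,
    ← setIntegral_indicator (measurableSet_Ioo.prod measurableSet_Ioo)]
  refine setIntegral_congr_fun polarCoord.open_target.measurableSet fun p hp ↦ ?_
  have hp0 : 0 < p.1 := hp.1
  have hsymm : Complex.polarCoord.symm p = circleMap 0 p.1 p.2 := by
    rw [Complex.polarCoord_symm_apply, circleMap_zero, Complex.exp_mul_I, Complex.ofReal_cos,
      Complex.ofReal_sin]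
  have hnorm : ‖circleMap 0 p.1 p.2‖ = p.1 := by rw [norm_circleMap_zero, abs_of_pos hp0]
  have hmem : circleMap 0 p.1 p.2 ∈ ball 0 R ↔ p ∈ Ioo 0 R ×ˢ Ioo (-Real.pi) Real.pi := by
    rw [mem_ball_zero_iff, hnorm]
    exact ⟨fun h ↦ ⟨⟨hp0, h⟩, hp.2⟩, fun h ↦ h.1.2⟩
  simp only [hsymm, indicator, hmem, hnorm]
  split_ifs
  exacts [smul_inv_smul₀ hp0.ne' _, smul_zero _]

theorem setIntegral_Ioo_circleMap_eq_circleAverage (F : ℂ → E) (c : ℂ) (ρ : ℝ) :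
    ∫ θ in Ioo (-Real.pi) Real.pi, F (circleMap c ρ θ) =
      (2 * Real.pi) • Real.circleAverage F c ρ := by
  rw [Real.circleAverage_eq_integral_add (-Real.pi), smul_inv_smul₀ Real.two_pi_pos.ne',
    intervalIntegral.integral_comp_add_right fun θ ↦ F (circleMap c ρ θ),
    intervalIntegral.integral_of_le (by linarith [Real.pi_pos]), integral_Ioc_eq_integral_Ioo,
    zero_add, two_mul, add_neg_cancel_right]

theorem integral_ball_norm_inv_smul (hR : 0 ≤ R) (hF : ContinuousOn F (closedBall 0 R)) :
    ∫ x in ball 0 R, ‖x‖⁻¹ • F x =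
      (2 * Real.pi) • ∫ ρ in 0..R, Real.circleAverage F 0 ρ := by
  have hcont : ContinuousOn (fun p : ℝ × ℝ ↦ F (circleMap 0 p.1 p.2))
      (Icc 0 R ×ˢ Icc (-Real.pi) Real.pi) := by
    refine hF.comp (by fun_prop) fun p hp ↦ ?_
    rw [mem_closedBall_zero_iff, norm_circleMap_zero, abs_of_nonneg hp.1.1]
    exact hp.1.2
  have hint : IntegrableOn (fun p : ℝ × ℝ ↦ F (circleMap 0 p.1 p.2))
      (Ioo 0 R ×ˢ Ioo (-Real.pi) Real.pi) (volume.prod volume) :=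
    (hcont.integrableOn_compact (isCompact_Icc.prod isCompact_Icc)).mono_set
      (prod_mono Ioo_subset_Icc_self Ioo_subset_Icc_self)
  rw [integral_ball_norm_inv_smul_eq_setIntegral_circleMap, Measure.volume_eq_prod,
    setIntegral_prod _ hint, intervalIntegral.integral_of_le hR, integral_Ioc_eq_integral_Ioo,
    ← integral_smul]
  simp only [setIntegral_Ioo_circleMap_eq_circleAverage]

end Polar

section RadialIntegral

theorem hasDerivAt_antiderivative_one_sub_sq_mul_div_pow_three {r x : ℝ} (hr : r ≠ 0)
    (h1 : 1 - r * x ≠ 0) (h2 : 1 + r * x ≠ 0) :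
    HasDerivAt (fun x ↦
        ((1 + 3 * r ^ 2) / (4 * r ^ 2) * x - (3 + r ^ 2) / 4 * x ^ 3) / (1 - (r * x) ^ 2) ^ 2 -
          (1 - r ^ 2) / (8 * r ^ 3) * (Real.log (1 + r * x) - Real.log (1 - r * x)))
      ((1 - x ^ 2) * (1 + (r * x) ^ 2) / (1 - (r * x) ^ 2) ^ 3) x := by
  have hfactor : 1 - (r * x) ^ 2 = (1 - r * x) * (1 + r * x) := by ring
  have hmul : HasDerivAt (fun x ↦ r * x) r x := by simpa using (hasDerivAt_id x).const_mul r
  have hlog := ((hmul.const_add 1).log h2).sub ((hmul.const_sub 1).log h1)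
  have hden := ((hmul.pow 2).const_sub 1).pow 2
  have hnum := ((hasDerivAt_id x).const_mul ((1 + 3 * r ^ 2) / (4 * r ^ 2))).sub
    (((hasDerivAt_id x).pow 3).const_mul ((3 + r ^ 2) / 4))
  refine ((hnum.div hden ?_).sub (hlog.const_mul ((1 - r ^ 2) / (8 * r ^ 3)))).congr_deriv ?_
  · simp only [Pi.pow_apply, hfactor]
    exact pow_ne_zero 2 (mul_ne_zero h1 h2)
  · simp only [Pi.pow_apply, Pi.sub_apply, id, hfactor]
    field_simp
    ring

theorem integral_one_sub_sq_mul_div_pow_three {r : ℝ} (h0 : 0 < r) (h1 : r < 1) :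
    ∫ x in (0 : ℝ)..1, (1 - x ^ 2) * (1 + (r * x) ^ 2) / (1 - (r * x) ^ 2) ^ 3 =
      1 / (4 * r ^ 2) * ((1 + r ^ 2) / (1 - r ^ 2) -
        (1 - r ^ 2) / (2 * r) * Real.log ((1 + r) / (1 - r))) := by
  have hpos {x : ℝ} (hx : x ∈ uIcc 0 1) : 0 < 1 - r * x ∧ 0 < 1 + r * x := by
    rw [uIcc_of_le zero_le_one] at hx
    have hmul_nonneg : 0 ≤ r * x := mul_nonneg h0.le hx.1
    have hmul_le : r * x ≤ r := mul_le_of_le_one_right h0.le hx.2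
    constructor <;> linarith
  have hcont : ContinuousOn (fun x ↦ (1 - x ^ 2) * (1 + (r * x) ^ 2) / (1 - (r * x) ^ 2) ^ 3)
      (uIcc 0 1) := by
    refine ContinuousOn.div (by fun_prop) (by fun_prop) fun x hx ↦ pow_ne_zero 3 ?_
    have := mul_pos (hpos hx).1 (hpos hx).2
    nlinarith
  rw [intervalIntegral.integral_eq_sub_of_hasDerivAt (fun x hx ↦
      hasDerivAt_antiderivative_one_sub_sq_mul_div_pow_three h0.ne' (hpos hx).1.ne' (hpos hx).2.ne')
    hcont.intervalIntegrable, Real.log_div (by linarith) (by linarith)]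
  have hden : 1 - r ^ 2 ≠ 0 := by nlinarith
  simp only [mul_one, mul_zero, add_zero, sub_zero, Real.log_one, one_pow]
  field_simp
  ring

end RadialIntegral

section ChangeOfVariables

theorem det_restrictScalars_toSpanSingleton (a : ℂ) :
    ((ContinuousLinearMap.toSpanSingleton ℂ a).restrictScalars ℝ : ℂ →L[ℝ] ℂ).det = ‖a‖ ^ 2 := by
  have hlmul : (((ContinuousLinearMap.toSpanSingleton ℂ a).restrictScalars ℝ : ℂ →L[ℝ] ℂ) :
      ℂ →ₗ[ℝ] ℂ) = Algebra.lmul ℝ ℂ a := by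
    ext
    simp [mul_comm]
  rw [ContinuousLinearMap.det, hlmul, ← Algebra.norm_apply, Algebra.norm_complex_apply,
    Complex.normSq_eq_norm_sq]

theorem integral_image_eq_integral_norm_deriv_sq_smul {E : Type*} [NormedAddCommGroup E]
    [NormedSpace ℝ E] {s : Set ℂ} {f f' : ℂ → ℂ} (hs : MeasurableSet s)
    (hf : ∀ x ∈ s, HasDerivAt f (f' x) x) (hinj : InjOn f s) (F : ℂ → E) :
    ∫ y in f '' s, F y = ∫ x in s, ‖f' x‖ ^ 2 • F (f x) := by
  rw [integral_image_eq_integral_abs_det_fderiv_smul volume hs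
    (fun x hx ↦ ((hf x hx).hasFDerivAt.restrictScalars ℝ).hasFDerivWithinAt) hinj]
  simp only [det_restrictScalars_toSpanSingleton, abs_sq]

end ChangeOfVariables

/-- The holomorphic involution of the unit disc that exchanges `0` and `z`. -/
def discInvolution (z x : ℂ) : ℂ := (z - x) / (1 - conj z * x)

section DiscInvolution

variable {z x : ℂ}

theorem one_sub_norm_sq_pos (hz : ‖z‖ < 1) : 0 < 1 - ‖z‖ ^ 2 := by
  nlinarith [norm_nonneg z]

theorem one_sub_conj_mul_ne_zero (hz : ‖z‖ < 1) (hx : ‖x‖ ≤ 1) : 1 - conj z * x ≠ 0 :=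
  one_sub_mul_ne_zero (by rwa [RCLike.norm_conj]) hx

theorem one_sub_norm_discInvolution_sq (hz : ‖z‖ < 1) (hx : ‖x‖ ≤ 1) :
    1 - ‖discInvolution z x‖ ^ 2 =
      (1 - ‖z‖ ^ 2) * (1 - ‖x‖ ^ 2) / ‖1 - conj z * x‖ ^ 2 := by
  have hden : ‖1 - conj z * x‖ ^ 2 ≠ 0 :=
    pow_ne_zero 2 (norm_ne_zero_iff.2 (one_sub_conj_mul_ne_zero hz hx))
  have hidentity : ‖1 - conj z * x‖ ^ 2 - ‖z - x‖ ^ 2 = (1 - ‖z‖ ^ 2) * (1 - ‖x‖ ^ 2) := by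
    rw [← Complex.ofReal_inj]
    push_cast
    simp only [← Complex.mul_conj', map_sub, map_mul, map_one, Complex.conj_conj]
    ring
  rw [discInvolution, norm_div, div_pow, one_sub_div hden, hidentity]

theorem norm_discInvolution_lt_one (hz : ‖z‖ < 1) (hx : ‖x‖ < 1) : ‖discInvolution z x‖ < 1 := by
  have hpos : 0 < 1 - ‖discInvolution z x‖ ^ 2 := by
    rw [one_sub_norm_discInvolution_sq hz hx.le]
    have hden := norm_pos_iff.2 (one_sub_conj_mul_ne_zero hz hx.le)
    have hz' := one_sub_norm_sq_pos hz
    have hx' := one_sub_norm_sq_pos hx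
    positivity
  nlinarith

theorem one_sub_conj_mul_discInvolution (hz : ‖z‖ < 1) (hx : ‖x‖ ≤ 1) :
    1 - conj z * discInvolution z x = (1 - ‖z‖ ^ 2 : ℝ) / (1 - conj z * x) := by
  have hden := one_sub_conj_mul_ne_zero hz hx
  rw [discInvolution, mul_div_assoc', one_sub_div hden, mul_sub, Complex.conj_mul']
  push_cast
  ring

theorem sub_discInvolution (hz : ‖z‖ < 1) (hx : ‖x‖ ≤ 1) :
    z - discInvolution z x = x * (1 - ‖z‖ ^ 2 : ℝ) / (1 - conj z * x) := by
  have hden := one_sub_conj_mul_ne_zero hz hx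
  rw [discInvolution, sub_div' hden]
  push_cast
  rw [← Complex.mul_conj']
  ring

theorem discInvolution_discInvolution (hz : ‖z‖ < 1) (hx : ‖x‖ ≤ 1) :
    discInvolution z (discInvolution z x) = x := by
  have hpos : ((1 - ‖z‖ ^ 2 : ℝ) : ℂ) ≠ 0 := by exact_mod_cast (one_sub_norm_sq_pos hz).ne'
  rw [discInvolution, one_sub_conj_mul_discInvolution hz hx, sub_discInvolution hz hx,
    div_div_div_cancel_right₀ (one_sub_conj_mul_ne_zero hz hx), mul_div_cancel_right₀ _ hpos]

theorem hasDerivAt_discInvolution (hz : ‖z‖ < 1) (hx : ‖x‖ ≤ 1) :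
    HasDerivAt (discInvolution z) (-(1 - ‖z‖ ^ 2 : ℝ) / (1 - conj z * x) ^ 2) x := by
  refine (((hasDerivAt_id x).const_sub z).div
    (((hasDerivAt_id x).const_mul (conj z)).const_sub 1)
    (one_sub_conj_mul_ne_zero hz hx)).congr_deriv ?_
  push_cast
  rw [← Complex.mul_conj']
  simp only [id]
  congr 1
  ring

theorem injOn_discInvolution (hz : ‖z‖ < 1) : InjOn (discInvolution z) (ball 0 1) := by
  intro x hx y hy hxy
  rw [mem_ball_zero_iff] at hx hy
  rw [← discInvolution_discInvolution hz hx.le, hxy, discInvolution_discInvolution hz hy.le]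

theorem discInvolution_image_ball (hz : ‖z‖ < 1) : discInvolution z '' ball 0 1 = ball 0 1 := by
  have hmaps : MapsTo (discInvolution z) (ball 0 1) (ball 0 1) := fun x hx ↦
    mem_ball_zero_iff.2 (norm_discInvolution_lt_one hz (mem_ball_zero_iff.1 hx))
  exact hmaps.image_subset.antisymm fun y hy ↦
    ⟨_, hmaps hy, discInvolution_discInvolution hz (mem_ball_zero_iff.1 hy).le⟩

theorem norm_greenLogDeriv {w : ℂ} (hw : ‖w‖ < 1) :
    ‖greenLogDeriv z w‖ = (1 - ‖w‖ ^ 2) / (‖z - w‖ * ‖1 - conj z * w‖) := by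
  have hconj : ‖z * conj w - 1‖ = ‖1 - conj z * w‖ := by
    rw [← RCLike.norm_conj, ← norm_neg]
    simp
  rw [greenLogDeriv, norm_div, norm_mul, hconj, Complex.norm_real,
    Real.norm_of_nonneg (one_sub_norm_sq_pos hw).le]

theorem norm_deriv_sq_smul_norm_greenLogDeriv_discInvolution (hz : ‖z‖ < 1) (hx : ‖x‖ < 1) :
    ‖-((1 - ‖z‖ ^ 2 : ℝ) : ℂ) / (1 - conj z * x) ^ 2‖ ^ 2 •
        ‖greenLogDeriv z (discInvolution z x)‖ =
      ‖x‖⁻¹ • ((1 - ‖z‖ ^ 2) * (1 - ‖x‖ ^ 2) * (‖1 - conj z * x‖ ^ 4)⁻¹) := by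
  have hden : 0 < ‖1 - conj z * x‖ := norm_pos_iff.2 (one_sub_conj_mul_ne_zero hz hx.le)
  have hz' := one_sub_norm_sq_pos hz
  rw [norm_greenLogDeriv (norm_discInvolution_lt_one hz hx),
    one_sub_conj_mul_discInvolution hz hx.le, sub_discInvolution hz hx.le,
    one_sub_norm_discInvolution_sq hz hx.le]
  simp only [norm_div, norm_mul, norm_neg, norm_pow, Complex.norm_real,
    Real.norm_of_nonneg hz'.le, smul_eq_mul]
  rcases eq_or_ne x 0 with rfl | hx0
  · simp
  · have := norm_pos_iff.2 hx0
    field_simp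

theorem integral_norm_greenLogDeriv_eq_integral_norm_inv_smul (hz : ‖z‖ < 1) :
    ∫ w in ball 0 1, ‖greenLogDeriv z w‖ =
      ∫ x in ball 0 1,
        ‖x‖⁻¹ • ((1 - ‖z‖ ^ 2) * (1 - ‖x‖ ^ 2) * (‖1 - conj z * x‖ ^ 4)⁻¹) := by
  rw [← discInvolution_image_ball hz, integral_image_eq_integral_norm_deriv_sq_smul
    measurableSet_ball (fun x hx ↦ hasDerivAt_discInvolution hz (mem_ball_zero_iff.1 hx).le)
    (injOn_discInvolution hz), discInvolution_image_ball hz]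
  exact setIntegral_congr_fun measurableSet_ball fun x hx ↦
    norm_deriv_sq_smul_norm_greenLogDeriv_discInvolution hz (mem_ball_zero_iff.1 hx)

end DiscInvolution

section GreenLogDerivNorm

variable {z : ℂ} {ρ : ℝ}

theorem circleAverage_one_sub_norm_sq_mul_inv_norm_pow_four (hz : ‖z‖ < 1) (h0 : 0 ≤ ρ)
    (h1 : ρ ≤ 1) :
    Real.circleAverage
        (fun x ↦ (1 - ‖z‖ ^ 2) * (1 - ‖x‖ ^ 2) * (‖1 - conj z * x‖ ^ 4)⁻¹) 0 ρ =
      (1 - ‖z‖ ^ 2) * ((1 - ρ ^ 2) * (1 + (‖z‖ * ρ) ^ 2) / (1 - (‖z‖ * ρ) ^ 2) ^ 3) := by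
  have hnorm : ‖conj z * ρ‖ = ‖z‖ * ρ := by
    rw [norm_mul, RCLike.norm_conj, Complex.norm_real, Real.norm_of_nonneg h0]
  have hlt : ‖conj z * ρ‖ < 1 := by
    rw [hnorm]
    exact (mul_le_of_le_one_right (norm_nonneg z) h1).trans_lt hz
  calc _ = Real.circleAverage (fun ζ ↦ ((1 - ‖z‖ ^ 2) * (1 - ρ ^ 2)) •
        (‖1 - conj z * ρ * ζ‖ ^ 4)⁻¹) 0 1 := by
        rw [Real.circleAverage_eq_circleAverage_zero_one]
        refine Real.circleAverage_congr_sphere fun ζ hζ ↦ ?_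
        rw [abs_one, mem_sphere_zero_iff_norm] at hζ
        simp [hζ, mul_assoc]
    _ = _ := by
        rw [Real.circleAverage_fun_smul, circleAverage_inv_norm_one_sub_mul_pow_four hlt, hnorm,
          smul_eq_mul]
        ring

theorem integral_norm_greenLogDeriv (hz : ‖z‖ < 1) (h0 : z ≠ 0) :
    ∫ w in ball 0 1, ‖greenLogDeriv z w‖ = 4 * Real.pi * mu 1 ‖z‖ := by
  have hcont : ContinuousOn
      (fun x ↦ (1 - ‖z‖ ^ 2) * (1 - ‖x‖ ^ 2) * (‖1 - conj z * x‖ ^ 4)⁻¹) (closedBall 0 1) := by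
    refine ContinuousOn.mul (by fun_prop) (ContinuousOn.inv₀ (by fun_prop) fun x hx ↦ ?_)
    exact pow_ne_zero 4 (norm_ne_zero_iff.2
      (one_sub_conj_mul_ne_zero hz (mem_closedBall_zero_iff.1 hx)))
  have hmean {ρ : ℝ} (hρ : ρ ∈ uIcc 0 1) := by
    rw [uIcc_of_le zero_le_one] at hρ
    exact circleAverage_one_sub_norm_sq_mul_inv_norm_pow_four hz hρ.1 hρ.2
  rw [integral_norm_greenLogDeriv_eq_integral_norm_inv_smul hz,
    integral_ball_norm_inv_smul zero_le_one hcont,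
    intervalIntegral.integral_congr fun ρ ↦ hmean, intervalIntegral.integral_const_mul,
    integral_one_sub_sq_mul_div_pow_three (norm_pos_iff.2 h0) hz, mu, smul_eq_mul]
  ring

theorem norm_integral_mul_le_mu_of_norm_eq {f g : ℂ → ℂ} {M : ℝ} (hz : ‖z‖ < 1) (h0 : z ≠ 0)
    (hf : ∀ w, ‖f w‖ = ‖greenLogDeriv z w‖)
    (hM : ∀ᵐ w ∂volume.restrict (ball 0 1), ‖g w‖ ≤ M) :
    ‖(1 / (4 * Real.pi) : ℝ) • ∫ w in ball 0 1, f w * g w‖ ≤ mu M ‖z‖ := by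
  have hle : ‖∫ w in ball 0 1, f w * g w‖ ≤ ∫ w in ball 0 1, ‖greenLogDeriv z w‖ * M := by
    refine norm_integral_le_of_norm_le ((integrableOn_greenLogDeriv hz).norm.mul_const M) ?_
    filter_upwards [hM] with w hw
    rw [norm_mul, hf]
    gcongr
  calc ‖(1 / (4 * Real.pi) : ℝ) • ∫ w in ball 0 1, f w * g w‖
      = 1 / (4 * Real.pi) * ‖∫ w in ball 0 1, f w * g w‖ := by
        rw [norm_smul, Real.norm_of_nonneg (by positivity)]
    _ ≤ 1 / (4 * Real.pi) * (4 * Real.pi * mu 1 ‖z‖ * M) := by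
        rw [integral_mul_const, integral_norm_greenLogDeriv hz h0] at hle
        gcongr
    _ = mu M ‖z‖ := by
        rw [mu, mu]
        field_simp

end GreenLogDerivNorm

theorem norm_le_supD {g : ℂ → ℂ} (hg : ContinuousOn g (closedBall 0 1)) {w : ℂ}
    (hw : w ∈ ball (0 : ℂ) 1) : ‖g w‖ ≤ supD g :=
  le_csSup (((isCompact_closedBall 0 1).bddAbove_image hg.norm).mono
    (image_mono ball_subset_closedBall)) (mem_image_of_mem _ hw)

theorem stmt7_general {g : ℂ → ℂ} {M : ℝ}
    (hg : AEStronglyMeasurable g (volume.restrict (ball 0 1)))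
    (hM : ∀ᵐ w ∂volume.restrict (ball 0 1), ‖g w‖ ≤ M) {z : ℂ} (hz : ‖z‖ < 1) (h0 : z ≠ 0) :
    ‖wdz (greenPotential g) z‖ ≤ mu M ‖z‖ ∧
      ‖wdzbar (greenPotential g) z‖ ≤ mu M ‖z‖ ∧
      wdz (greenPotential g) z =
        (1 / (4 * Real.pi) : ℝ) • ∫ w in ball (0 : ℂ) 1,
          (((1 - ‖w‖ ^ 2 : ℝ) : ℂ) / ((z - w) * (z * conj w - 1))) * g w := by
  have hderiv := hasFDerivAt_greenPotential hg hM hz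
  refine ⟨?_, ?_, wdz_eq_of_hasFDerivAt hderiv⟩
  · rw [wdz_eq_of_hasFDerivAt hderiv]
    exact norm_integral_mul_le_mu_of_norm_eq hz h0 (fun _ ↦ rfl) hM
  · rw [wdzbar_eq_of_hasFDerivAt hderiv]
    exact norm_integral_mul_le_mu_of_norm_eq hz h0 (fun _ ↦ RCLike.norm_conj _) hM

end

/-- Bounds on the Wirtinger derivatives of the Green potential, and the integral
formula for `∂G_g/∂z`. -/
theorem stmt7 (g : ℂ → ℂ) (hg : ContinuousOn g (closedBall (0:ℂ) 1)) :
    ∀ z ∈ ball (0:ℂ) 1, z ≠ 0 →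
      ‖wdz (greenPotential g) z‖ ≤ mu (supD g) ‖z‖ ∧
      ‖wdzbar (greenPotential g) z‖ ≤ mu (supD g) ‖z‖ ∧
      wdz (greenPotential g) z =
        (1 / (4 * Real.pi) : ℝ) • ∫ w in ball (0:ℂ) 1,
          (((1 - ‖w‖ ^ 2 : ℝ) : ℂ) / ((z - w) * (z * (starRingEnd ℂ) w - 1))) * g w := by
  exact fun z hz h0 ↦ stmt7_general
    ((hg.mono ball_subset_closedBall).aestronglyMeasurable measurableSet_ball)
    ((ae_restrict_mem measurableSet_ball).mono fun _ ↦ norm_le_supD hg) (mem_ball_zero_iff.1 hz) h0
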